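/- arXiv:1810.11389 — 3 statements merged into one kernel-verified Lean document; each statement's English description precedes it below -/
import Mathlib

section
/- Suppose Ω_n is a sequence of convex domains in ℂ^d containing no complex affine line converging in the local Hausdorff topology to a convex domain Ω ∈ 𝕏_d, p_n ∈ Ω_n ∩ Ω is a sequence converging to p ∈ Ω, and v_n are unit vectors in ℂ^d converging to v. Then k_Ω(p; v) ≤ liminf_{n→∞} k_{Ω_n}(p_n; v_n). -/
open Set Metric Filter Topology
open scoped ENNReal NNReal

noncomputable section

section Defs

variable {E F : Type*} [NormedAddCommGroup E] [NormedSpace ℂ E]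
  [NormedAddCommGroup F] [NormedSpace ℂ F]

/-- A convex domain: a non-empty open convex subset. -/
def IsConvexDomain (Ω : Set E) : Prop := IsOpen Ω ∧ Convex ℝ Ω ∧ Ω.Nonempty

/-- `Ω` contains no complex affine line `a + ℂ·b`, `b ≠ 0`. -/
def NoComplexLine (Ω : Set E) : Prop :=
  ∀ a b : E, b ≠ 0 → ¬ (∀ lam : ℂ, a + lam • b ∈ Ω)

/-- Membership in `𝕏_d`: a convex domain containing no complex affine line. -/
def InX (Ω : Set E) : Prop := IsConvexDomain Ω ∧ NoComplexLine Ω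

/-- Convergence of a sequence of sets in the local Hausdorff topology. -/
def LocHausConv (Ωn : ℕ → Set E) (Ω : Set E) : Prop :=
  ∃ R₀ : ℝ, 0 < R₀ ∧ ∀ R : ℝ, R₀ ≤ R →
    Tendsto (fun n => Metric.hausdorffDist (Ωn n ∩ Metric.ball 0 R) (Ω ∩ Metric.ball 0 R))
      atTop (nhds 0)

/-- The sequence `z` is compactly divergent in `Ω`. -/
def CompactlyDivergent (Ω : Set E) (z : ℕ → E) : Prop :=
  ∀ K : Set E, IsCompact K → K ⊆ Ω → ∃ N : ℕ, ∀ n ≥ N, z n ∉ K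

/-- `Ω'` is an affine limit of `Ω`. -/
def IsAffineLimit (Ω Ω' : Set E) : Prop :=
  InX Ω' ∧
  ∃ (z : ℕ → E) (zlim : E) (A : ℕ → (E ≃ᵃ[ℂ] E)),
    (∀ n, z n ∈ Ω) ∧ CompactlyDivergent Ω z ∧ zlim ∈ Ω' ∧
    LocHausConv (fun n => (A n) '' Ω) Ω' ∧
    Tendsto (fun n => A n (z n)) atTop (nhds zlim)

/-- `S ⊆ E` and `T ⊆ F` are biholomorphic. -/
def Biholomorphic (S : Set E) (T : Set F) : Prop :=
  ∃ (f : E → F) (g : F → E),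
    DifferentiableOn ℂ f S ∧ DifferentiableOn ℂ g T ∧
    MapsTo f S T ∧ MapsTo g T S ∧ InvOn g f S T

/-- The bidisk `𝔻 × 𝔻 ⊆ ℂ × ℂ`. -/
def unitBidisk : Set (ℂ × ℂ) := (Metric.ball (0:ℂ) 1) ×ˢ (Metric.ball (0:ℂ) 1)

/-- The infinitesimal Kobayashi metric of `Ω ⊆ E`. -/
def kob (Ω : Set E) (z v : E) : ℝ :=
  sInf { c : ℝ | ∃ (ξ : ℂ) (f : ℂ → E),
    DifferentiableOn ℂ f (Metric.ball 0 1) ∧ MapsTo f (Metric.ball 0 1) Ω ∧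
    f 0 = z ∧ ξ • deriv f 0 = v ∧ c = ‖ξ‖ }

/-- `δ_Ω(z; v)`: the distance from `z` to `(z + ℂ·v) ∩ ∂Ω`, valued in `ℝ≥0∞`
(`⊤` when the intersection is empty). -/
def distInDir (Ω : Set E) (z v : E) : ℝ≥0∞ :=
  EMetric.infEdist z ({x | ∃ lam : ℂ, x = z + lam • v} ∩ frontier Ω)

end Defs


section Aux

theorem LocHausConv.eventually_exists_dist_lt {E : Type*} [NormedAddCommGroup E]
    {Ωn : ℕ → Set E} {Ω : Set E}
    (h : LocHausConv Ωn Ω) {p : ℕ → E} {q : E} (hp : ∀ n, p n ∈ Ωn n ∩ Ω)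
    (hpq : Tendsto p atTop (𝓝 q)) (R : ℝ) {δ : ℝ} (hδ : 0 < δ) :
    ∀ᶠ n in atTop, (∀ x ∈ Ωn n, ‖x‖ < R → ∃ y ∈ Ω, dist x y < δ) ∧
      (∀ y ∈ Ω, ‖y‖ < R → ∃ x ∈ Ωn n, dist y x < δ) := by
  obtain ⟨R₀, -, h⟩ := h
  set R' := max R (max R₀ (‖q‖ + 1))
  have hR : R ≤ R' := le_max_left _ _
  have hR₀ : R₀ ≤ R' := (le_max_left _ _).trans (le_max_right _ _)
  have hq : ‖q‖ + 1 ≤ R' := (le_max_right _ _).trans (le_max_right _ _)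
  filter_upwards [(h R' hR₀).eventually_lt_const hδ,
    hpq.norm.eventually_lt_const (lt_add_one ‖q‖)] with n hn hpn
  have hmem : p n ∈ ball (0 : E) R' := by
    rw [mem_ball_zero_iff]; exact hpn.trans_le hq
  have hfin : hausdorffEDist (Ωn n ∩ ball 0 R') (Ω ∩ ball 0 R') ≠ ⊤ :=
    hausdorffEDist_ne_top_of_nonempty_of_bounded ⟨p n, (hp n).1, hmem⟩ ⟨p n, (hp n).2, hmem⟩
      (isBounded_ball.subset inter_subset_right) (isBounded_ball.subset inter_subset_right)
  constructor
  · intro x hx hxR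
    obtain ⟨y, hy, hxy⟩ := exists_dist_lt_of_hausdorffDist_lt
      (show x ∈ Ωn n ∩ ball 0 R' from ⟨hx, mem_ball_zero_iff.2 (hxR.trans_le hR)⟩) hn hfin
    exact ⟨y, hy.1, hxy⟩
  · intro y hy hyR
    obtain ⟨x, hx, hxy⟩ := exists_dist_lt_of_hausdorffDist_lt'
      (show y ∈ Ω ∩ ball 0 R' from ⟨hy, mem_ball_zero_iff.2 (hyR.trans_le hR)⟩) hn hfin
    exact ⟨x, hx.1, by rwa [dist_comm]⟩

variable {E : Type*} [NormedAddCommGroup E] [NormedSpace ℂ E]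

/-- A locally bounded, pointwise convergent family of holomorphic maps on the disk converges
locally uniformly. -/
theorem tendstoLocallyUniformlyOn_of_pointwise {ι : Type*} {l : Filter ι} [l.NeBot]
    {F : ι → ℂ → E} {f : ℂ → E}
    (hd : ∀ᶠ n in l, DifferentiableOn ℂ (F n) (ball 0 1))
    (hb : ∀ r : ℝ, r < 1 → ∃ C : ℝ, ∀ᶠ n in l, ∀ z ∈ closedBall (0 : ℂ) r, ‖F n z‖ ≤ C)
    (hf : ∀ z ∈ ball (0 : ℂ) 1, Tendsto (fun n => F n z) l (𝓝 (f z))) :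
    TendstoLocallyUniformlyOn F f l (ball 0 1) := by
  rw [Metric.tendstoLocallyUniformlyOn_iff]
  intro ε hε z hz
  rw [mem_ball_zero_iff] at hz
  set R := (1 - ‖z‖) / 2 with hRdef
  have hR : 0 < R := by rw [hRdef]; linarith
  obtain ⟨C, hC⟩ := hb ((1 + ‖z‖) / 2) (by linarith)
  have hsub : ∀ w ∈ ball z R, w ∈ closedBall (0 : ℂ) ((1 + ‖z‖) / 2) := by
    intro w hw
    rw [mem_ball, dist_eq_norm] at hw
    rw [mem_closedBall_zero_iff]
    have := norm_le_norm_sub_add w z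
    linarith
  have hsub1 : ball z R ⊆ ball (0 : ℂ) 1 := fun w hw => by
    have := hsub w hw
    rw [mem_closedBall_zero_iff] at this
    rw [mem_ball_zero_iff]; linarith
  have hzR : z ∈ ball z R := mem_ball_self hR
  set K := (2 * |C| + 1) / R
  have hK : 0 < K := by positivity
  have hlip : ∀ᶠ n in l, ∀ w ∈ ball z R, dist (F n w) (F n z) ≤ K * dist w z := by
    filter_upwards [hd, hC] with n hdn hCn w hw
    refine Complex.dist_le_div_mul_dist_of_mapsTo_ball (hdn.mono hsub1) ?_ hw
    intro y hy
    have h1 := (hCn y (hsub y hy)).trans (le_abs_self C)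
    have h2 := (hCn z (hsub z hzR)).trans (le_abs_self C)
    rw [mem_closedBall, dist_eq_norm]
    have := norm_sub_le (F n y) (F n z)
    linarith
  have hlipf : ∀ w ∈ ball z R, dist (f w) (f z) ≤ K * dist w z := fun w hw =>
    le_of_tendsto ((hf w (hsub1 hw)).dist (hf z (hsub1 hzR))) (hlip.mono fun n hn => hn w hw)
  set δ := min R (ε / (3 * K))
  have hδ : 0 < δ := by positivity
  refine ⟨ball z δ, mem_nhdsWithin_of_mem_nhds (ball_mem_nhds z hδ), ?_⟩
  filter_upwards [hlip, Metric.tendsto_nhds.1 (hf z (hsub1 hzR)) (ε / 3) (by positivity)]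
    with n hn hnz w hw
  have hwR : w ∈ ball z R := ball_subset_ball (min_le_left _ _) hw
  have hKw : K * dist w z < ε / 3 := by
    have : dist w z < ε / (3 * K) := (mem_ball.1 hw).trans_le (min_le_right _ _)
    rw [lt_div_iff₀ (by positivity)] at this
    linarith
  have h1 := hlipf w hwR
  have h2 := hn w hwR
  have h3 := dist_triangle4 (f w) (f z) (F n z) (F n w)
  rw [dist_comm (f z) (F n z), dist_comm (F n z) (F n w)] at h3
  linarith

theorem Convex.exists_norm_eq_one_forall_re_lt {S : Set E} (hc : Convex ℝ S) (ho : IsOpen S)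
    (hne : S.Nonempty) {x : E} (hx : x ∉ S) :
    ∃ φ : E →L[ℂ] ℂ, ‖φ‖ = 1 ∧ ∀ y ∈ S, (φ y).re < (φ x).re := by
  obtain ⟨φ, hφ⟩ := RCLike.geometric_hahn_banach_open_point (𝕜 := ℂ) hc ho hx
  obtain ⟨y₀, hy₀⟩ := hne
  have h0 : φ ≠ 0 := by
    rintro rfl
    simpa using hφ y₀ hy₀
  have hpos : 0 < ‖φ‖ := norm_pos_iff.2 h0
  refine ⟨((‖φ‖⁻¹ : ℝ) : ℂ) • φ, ?_, fun y hy => ?_⟩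
  · rw [norm_smul, Complex.norm_real, norm_inv, norm_norm, inv_mul_cancel₀ hpos.ne']
  · have := hφ y hy
    simp only [smul_apply, smul_eq_mul, Complex.re_ofReal_mul]
    exact mul_lt_mul_of_pos_left this (inv_pos.2 hpos)

theorem re_lt_of_forall_re_le {S : Set E} (ho : IsOpen S) {φ : E →L[ℂ] ℂ} (hφ : φ ≠ 0) {c : ℝ}
    (h : ∀ y ∈ S, (φ y).re ≤ c) {q : E} (hq : q ∈ S) : (φ q).re < c := by
  obtain ⟨u, hu⟩ : ∃ u, φ u ≠ 0 := by
    by_contra! hcon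
    exact hφ (ContinuousLinearMap.ext hcon)
  set w := (φ u)⁻¹ • u
  have hw : φ w = 1 := by simp [w, hu]
  have hlim : Tendsto (fun t : ℝ => q + (t : ℂ) • w) (𝓝[>] 0) (𝓝 q) := by
    have : Continuous fun t : ℝ => q + (t : ℂ) • w := by fun_prop
    simpa using (this.tendsto 0).mono_left nhdsWithin_le_nhds
  obtain ⟨t, ht, htpos⟩ := ((hlim.eventually (ho.mem_nhds hq)).and self_mem_nhdsWithin).exists
  have h1 := h _ ht
  rw [map_add, map_smul, hw] at h1
  have h2 : (0 : ℝ) < t := htpos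
  simp at h1
  linarith

theorem InX.exists_notMem_closure {Ω : Set E} (hΩ : InX Ω) {q b : E} (hq : q ∈ Ω) (hb : b ≠ 0) :
    ∃ lam : ℂ, q + lam • b ∉ closure Ω := by
  by_contra! hcon
  refine hΩ.2 q b hb fun lam => ?_
  have h := hΩ.1.2.1.combo_interior_closure_mem_interior
    (by rwa [hΩ.1.1.interior_eq]) (hcon (2 * lam))
    (show (0 : ℝ) < 1 / 2 by norm_num) (show (0 : ℝ) ≤ 1 / 2 by norm_num) (by norm_num)
  rw [hΩ.1.1.interior_eq] at h
  convert h using 1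
  rw [smul_add, ← add_assoc, ← add_smul, ← Complex.coe_smul (1 / 2 : ℝ) ((2 * lam) • b), smul_smul]
  congr 1
  · norm_num
  · congr 1
    push_cast
    ring

/-- A holomorphic map from the disk into the closure of an open convex set which sends the origin
into the set has its whole image in the set. -/
theorem mapsTo_of_mapsTo_closure {S : Set E} (hc : Convex ℝ S) (ho : IsOpen S) {f : ℂ → E}
    (hd : DifferentiableOn ℂ f (ball 0 1)) (hf : MapsTo f (ball 0 1) (closure S))
    (h0 : f 0 ∈ S) : MapsTo f (ball 0 1) S := by
  intro z hz
  by_contra hzS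
  obtain ⟨φ, -, hφ⟩ := hc.exists_norm_eq_one_forall_re_lt ho ⟨_, h0⟩ hzS
  have hle : ∀ w ∈ ball (0 : ℂ) 1, (φ (f w)).re ≤ (φ (f z)).re := fun w hw =>
    closure_minimal (t := {y | (φ y).re ≤ (φ (f z)).re}) (fun y hy => (hφ y hy).le)
      (isClosed_le (by fun_prop) continuous_const) (hf hw)
  have hg : DifferentiableOn ℂ (fun w => Complex.exp (φ (f w))) (ball 0 1) :=
    (φ.differentiable.comp_differentiableOn hd).cexp
  have hmax : IsMaxOn (norm ∘ fun w => Complex.exp (φ (f w))) (ball 0 1) z := fun w hw => by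
    simpa [Complex.norm_exp] using hle w hw
  have := Complex.norm_eqOn_of_isPreconnected_of_isMaxOn
    (convex_ball (0 : ℂ) 1).isPreconnected isOpen_ball hg hz hmax
    (mem_ball_self one_pos : (0 : ℂ) ∈ ball (0 : ℂ) 1)
  simp only [Function.comp, Function.const_apply, Complex.norm_exp, Real.exp_eq_exp] at this
  exact (hφ _ h0).ne this

theorem norm_le_of_re_le {g : ℂ → ℂ} {M A r : ℝ} (hM : 0 < M)
    (hd : DifferentiableOn ℂ g (ball 0 1)) (hg : ∀ z ∈ ball (0 : ℂ) 1, (g z).re ≤ M)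
    (h0 : ‖g 0‖ ≤ A) (hr : r < 1) {z : ℂ} (hz : ‖z‖ ≤ r) :
    ‖g z‖ ≤ 2 * M / (1 - r) + A * 2 / (1 - r) := by
  have hz1 : ‖z‖ < 1 := hz.trans_lt hr
  have hA : 0 ≤ A := (norm_nonneg _).trans h0
  have hr' : 0 < 1 - r := by linarith
  refine (Complex.borelCaratheodory hM hd (fun w hw => hg w hw) one_pos
    (mem_ball_zero_iff.2 hz1)).trans (add_le_add ?_ ?_)
  · refine div_le_div₀ (by positivity) ?_ hr' (by linarith)
    nlinarith
  · refine div_le_div₀ (by positivity) ?_ hr' (by linarith)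
    exact mul_le_mul h0 (by linarith) (by positivity) hA

theorem bddBelow_kob (Ω : Set E) (z v : E) : BddBelow { c : ℝ | ∃ (ξ : ℂ) (f : ℂ → E),
    DifferentiableOn ℂ f (Metric.ball 0 1) ∧ MapsTo f (Metric.ball 0 1) Ω ∧
    f 0 = z ∧ ξ • deriv f 0 = v ∧ c = ‖ξ‖ } := by
  refine ⟨0, ?_⟩
  rintro c ⟨ξ, f, -, -, -, -, rfl⟩
  exact norm_nonneg ξ

theorem exists_disk_of_kob_lt {Ω : Set E} (ho : IsOpen Ω) {z v : E} (hz : z ∈ Ω) (hv : ‖v‖ = 1)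
    {c : ℝ} (h : kob Ω z v < c) : ∃ (ξ : ℂ) (f : ℂ → E),
    DifferentiableOn ℂ f (ball 0 1) ∧ MapsTo f (ball 0 1) Ω ∧
    f 0 = z ∧ ξ • deriv f 0 = v ∧ ‖ξ‖ < c := by
  obtain ⟨_, ⟨ξ, f, h1, h2, h3, h4, rfl⟩, hc⟩ := exists_lt_of_csInf_lt (by
    obtain ⟨ε, hε, hball⟩ := Metric.isOpen_iff.1 ho z hz
    have hderiv : HasDerivAt (fun w : ℂ => z + w • ((ε : ℂ) • v)) ((ε : ℂ) • v) 0 := by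
      simpa using ((hasDerivAt_id (0 : ℂ)).smul_const ((ε : ℂ) • v)).const_add z
    refine ⟨_, (ε : ℂ)⁻¹, fun w => z + w • ((ε : ℂ) • v), ?_, ?_, by simp, ?_, rfl⟩
    · fun_prop
    · intro w hw
      rw [mem_ball_zero_iff] at hw
      apply hball
      rw [mem_ball, dist_eq_norm, add_sub_cancel_left, norm_smul, norm_smul, hv,
        Complex.norm_real, Real.norm_of_nonneg hε.le]
      nlinarith
    · rw [hderiv.deriv, smul_smul, inv_mul_cancel₀ (by exact_mod_cast hε.ne'), one_smul]) h
  exact ⟨ξ, f, h1, h2, h3, h4, hc⟩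

/-- Any bounded sequence in a proper space converges along an ultrafilter. -/
theorem Ultrafilter.exists_tendsto_of_eventually_norm_le {ι G : Type*} [NormedAddCommGroup G]
    [ProperSpace G] (U : Ultrafilter ι) {u : ι → G} {C : ℝ} (h : ∀ᶠ n in (U : Filter ι), ‖u n‖ ≤ C) :
    ∃ x, Tendsto u U (𝓝 x) := by
  obtain ⟨x, -, hx⟩ := (isCompact_closedBall (0 : G) C).ultrafilter_le_nhds (U.map u) (by
    rw [le_principal_iff, Ultrafilter.coe_map, Filter.mem_map]
    filter_upwards [h] with n hn
    exact mem_closedBall_zero_iff.2 hn)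
  exact ⟨x, hx⟩

/-- Local uniform boundedness of holomorphic disks in convex domains converging to a convex domain
without complex lines. -/
theorem exists_bound_of_locHausConv [FiniteDimensional ℂ E] {Ωn : ℕ → Set E}
    (hΩn : ∀ n, InX (Ωn n)) {Ω : Set E} (hΩ : InX Ω) (hconv : LocHausConv Ωn Ω)
    {p : ℕ → E} {q : E} (hp : ∀ n, p n ∈ Ωn n ∩ Ω) (hq : q ∈ Ω) (hpq : Tendsto p atTop (𝓝 q))
    (U : Ultrafilter ℕ) (hU : (U : Filter ℕ) ≤ atTop) {f : ℕ → ℂ → E}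
    (hf : ∀ᶠ n in (U : Filter ℕ), DifferentiableOn ℂ (f n) (ball 0 1) ∧
      MapsTo (f n) (ball 0 1) (Ωn n) ∧ f n 0 = p n) {r : ℝ} (hr : r < 1) :
    ∃ C : ℝ, ∀ᶠ n in (U : Filter ℕ), ∀ z ∈ closedBall (0 : ℂ) r, ‖f n z‖ ≤ C := by
  have : ProperSpace E := FiniteDimensional.proper ℂ E
  have : ProperSpace (E →L[ℂ] ℂ) := FiniteDimensional.proper ℂ _
  by_contra! hcon
  have hex : ∀ n, ∃ z, ∀ C : ℝ, DifferentiableOn ℂ (f n) (ball 0 1) →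
      (∃ w ∈ closedBall (0 : ℂ) r, C < ‖f n w‖) → z ∈ closedBall (0 : ℂ) r ∧ C < ‖f n z‖ := by
    intro n
    by_cases hn : DifferentiableOn ℂ (f n) (ball 0 1) ∧ (closedBall (0 : ℂ) r).Nonempty
    · have hcont : ContinuousOn (fun z => ‖f n z‖) (closedBall (0 : ℂ) r) :=
        (hn.1.continuousOn.mono (closedBall_subset_ball hr)).norm
      obtain ⟨z, hz, hmax⟩ := (isCompact_closedBall (0 : ℂ) r).exists_isMaxOn hn.2 hcont
      exact ⟨z, fun C _ ⟨w, hw, hCw⟩ => ⟨hz, hCw.trans_le (hmax hw)⟩⟩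
    · exact ⟨0, fun C hd ⟨w, hw, _⟩ => (hn ⟨hd, ⟨w, hw⟩⟩).elim⟩
  choose z hz using hex
  have hlarge : ∀ C : ℝ, ∀ᶠ n in (U : Filter ℕ), z n ∈ closedBall (0 : ℂ) r ∧ C < ‖f n (z n)‖ := by
    intro C
    filter_upwards [hcon C, hf] with n hn hfn
    exact hz n C hfn.1 hn
  have htop : Tendsto (fun n => ‖f n (z n)‖) U atTop :=
    tendsto_atTop.2 fun C => (hlarge C).mono fun n hn => hn.2.le
  set u : ℕ → E := fun n => ((‖f n (z n)‖⁻¹ : ℝ) : ℂ) • f n (z n) with hu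
  have hu1 : ∀ᶠ n in (U : Filter ℕ), ‖u n‖ = 1 := by
    filter_upwards [hlarge 0] with n hn
    rw [hu, norm_smul, Complex.norm_real, norm_inv, norm_norm, inv_mul_cancel₀ hn.2.ne']
  obtain ⟨b, hb⟩ := U.exists_tendsto_of_eventually_norm_le (hu1.mono fun n hn => hn.le)
  have hb1 : ‖b‖ = 1 := tendsto_nhds_unique hb.norm (tendsto_const_nhds.congr' (hu1.mono
    fun n hn => hn.symm))
  obtain ⟨lam, hx⟩ := hΩ.exists_notMem_closure hq (b := b) (by
    rintro rfl; simp at hb1)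
  set x := q + lam • b with hxdef
  have hxn : ∀ᶠ n in (U : Filter ℕ), x ∉ Ωn n := by
    rw [Metric.mem_closure_iff] at hx
    push Not at hx
    obtain ⟨δ, hδ, hx⟩ := hx
    filter_upwards [hU (hconv.eventually_exists_dist_lt hp hpq (‖x‖ + 1) hδ)] with n hn hmem
    obtain ⟨y, hy, hxy⟩ := hn.1 x hmem (lt_add_one _)
    exact (hx y hy).not_gt hxy
  obtain ⟨φ, hφ⟩ : ∃ φ : ℕ → E →L[ℂ] ℂ, ∀ᶠ n in (U : Filter ℕ),
      ‖φ n‖ = 1 ∧ ∀ y ∈ Ωn n, (φ n y).re < (φ n x).re :=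
    (hxn.mono fun n hn => (hΩn n).1.2.1.exists_norm_eq_one_forall_re_lt (hΩn n).1.1
      (hΩn n).1.2.2 hn).choice
  obtain ⟨ψ, hψ⟩ := U.exists_tendsto_of_eventually_norm_le (hφ.mono fun n hn => hn.1.le)
  have hψ1 : ‖ψ‖ = 1 := tendsto_nhds_unique hψ.norm (tendsto_const_nhds.congr' (hφ.mono
    fun n hn => hn.1.symm))
  have heval : ∀ {y : ℕ → E} {y' : E}, Tendsto y U (𝓝 y') →
      Tendsto (fun n => φ n (y n)) U (𝓝 (ψ y')) := fun {_ y'} hy =>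
    (isBoundedBilinearMap_apply.continuous.tendsto (ψ, y')).comp (hψ.prodMk_nhds hy)
  have happ : ∀ y, Tendsto (fun n => (φ n y).re) U (𝓝 (ψ y).re) := fun y =>
    (Complex.continuous_re.tendsto _).comp (heval tendsto_const_nhds)
  have hψle : ∀ y ∈ Ω, (ψ y).re ≤ (ψ x).re := by
    intro y hy
    refine le_of_forall_pos_le_add fun δ hδ => ?_
    refine le_of_tendsto_of_tendsto (happ y) ((happ x).add_const δ) ?_
    filter_upwards [hφ, hU (hconv.eventually_exists_dist_lt hp hpq (‖y‖ + 1) hδ)] with n hn hn'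
    obtain ⟨y', hy', hyy'⟩ := hn'.2 y hy (lt_add_one _)
    have h1 := hn.2 y' hy'
    have h2 : (φ n (y - y')).re ≤ dist y y' := by
      refine (Complex.re_le_norm _).trans (((φ n).le_opNorm _).trans ?_)
      rw [hn.1, one_mul, dist_eq_norm]
    rw [map_sub, Complex.sub_re] at h2
    linarith
  have hψb : ψ b ≠ 0 := by
    intro h0
    have h1 := re_lt_of_forall_re_le hΩ.1.1 (φ := ψ) (by rintro rfl; simp at hψ1) hψle hq
    rw [hxdef, map_add, map_smul, h0] at h1
    simp at h1
  refine hψb (tendsto_nhds_unique (heval hb) ?_)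
  set B := 2 * (‖x‖ + 1) / (1 - r) + (‖q‖ + 1) * 2 / (1 - r)
  have hle : ∀ᶠ n in (U : Filter ℕ), ‖φ n (u n)‖ ≤ ‖f n (z n)‖⁻¹ * B := by
    filter_upwards [hf, hφ, hlarge 0, hU (hpq.norm.eventually_lt_const (lt_add_one ‖q‖))]
      with n hfn hφn hzn hpn
    have hbound : ∀ y, ‖φ n y‖ ≤ ‖y‖ := fun y => by
      simpa [hφn.1] using (φ n).le_opNorm y
    rw [hu, map_smul, norm_smul, Complex.norm_real, norm_inv, norm_norm]
    refine mul_le_mul_of_nonneg_left ?_ (by positivity)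
    refine norm_le_of_re_le (g := fun w => φ n (f n w)) (by positivity)
      ((φ n).differentiable.comp_differentiableOn hfn.1) (fun w hw => ?_) ?_ hr
      (mem_closedBall_zero_iff.1 hzn.1)
    · have h1 := hφn.2 _ (hfn.2.1 hw)
      have h2 := (Complex.re_le_norm _).trans (hbound x)
      linarith
    · rw [hfn.2.2]
      exact (hbound _).trans hpn.le
  exact squeeze_zero_norm' hle (by simpa using htop.inv_tendsto_atTop.mul_const B)

end Aux

/-- lower semicontinuity of the Kobayashi metric under local Hausdorff
convergence: `k_Ω(p; v) ≤ liminf k_{Ω_n}(p_n; v_n)` (liminf taken in `ℝ≥0∞`). -/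
theorem statement9 (d : ℕ) (Ωn : ℕ → Set (EuclideanSpace ℂ (Fin d)))
    (hΩn : ∀ n, InX (Ωn n))
    (Ω : Set (EuclideanSpace ℂ (Fin d))) (hΩ : InX Ω)
    (hconv : LocHausConv Ωn Ω)
    (p : ℕ → EuclideanSpace ℂ (Fin d)) (plim : EuclideanSpace ℂ (Fin d))
    (hp : ∀ n, p n ∈ Ωn n ∩ Ω) (hplim : plim ∈ Ω) (hptend : Tendsto p atTop (nhds plim))
    (v : ℕ → EuclideanSpace ℂ (Fin d)) (vlim : EuclideanSpace ℂ (Fin d))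
    (hv : ∀ n, ‖v n‖ = 1) (hvtend : Tendsto v atTop (nhds vlim)) :
    ENNReal.ofReal (kob Ω plim vlim) ≤
      Filter.liminf (fun n => ENNReal.ofReal (kob (Ωn n) (p n) (v n))) atTop := by
  by_contra! hlt
  obtain ⟨c, hc1, hc2⟩ := exists_between hlt
  lift c to ℝ≥0 using hc2.ne_top
  have hfreq := frequently_lt_of_liminf_lt (by isBoundedDefault) hc1
  have hcK : (c : ℝ) < kob Ω plim vlim := by
    refine lt_of_not_ge fun h => hc2.not_ge ?_
    simpa using ENNReal.ofReal_le_ofReal h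
  have := frequently_iff_neBot.1 hfreq
  let U := Ultrafilter.of
    (atTop ⊓ 𝓟 {n | ENNReal.ofReal (kob (Ωn n) (p n) (v n)) < (c : ℝ≥0∞)})
  have hU : (U : Filter ℕ) ≤ atTop := (Ultrafilter.of_le _).trans inf_le_left
  have hUc : ∀ᶠ n in (U : Filter ℕ), ENNReal.ofReal (kob (Ωn n) (p n) (v n)) < (c : ℝ≥0∞) :=
    le_principal_iff.1 ((Ultrafilter.of_le _).trans inf_le_right)
  have hdisk : ∀ᶠ n in (U : Filter ℕ), ∃ g : ℂ × (ℂ → EuclideanSpace ℂ (Fin d)),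
      DifferentiableOn ℂ g.2 (ball 0 1) ∧ MapsTo g.2 (ball 0 1) (Ωn n) ∧
      g.2 0 = p n ∧ g.1 • deriv g.2 0 = v n ∧ ‖g.1‖ < c := by
    filter_upwards [hUc] with n hn
    obtain ⟨ξ, f, h⟩ := exists_disk_of_kob_lt (hΩn n).1.1 (hp n).1 (hv n)
      (c := c) (lt_of_not_ge fun h => hn.not_ge (by simpa using ENNReal.ofReal_le_ofReal h))
    exact ⟨(ξ, f), h⟩
  obtain ⟨g, hg⟩ := hdisk.choice
  have hb : ∀ r : ℝ, r < 1 → ∃ C : ℝ, ∀ᶠ n in (U : Filter ℕ),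
      ∀ z ∈ closedBall (0 : ℂ) r, ‖(g n).2 z‖ ≤ C := fun r hr =>
    exists_bound_of_locHausConv hΩn hΩ hconv hp hplim hptend U hU
      (hg.mono fun n hn => ⟨hn.1, hn.2.1, hn.2.2.1⟩) hr
  obtain ⟨ξ, hξ⟩ := U.exists_tendsto_of_eventually_norm_le
    (hg.mono fun n hn => hn.2.2.2.2.le)
  have hpt : ∀ z : ℂ, ∃ y, z ∈ ball (0 : ℂ) 1 → Tendsto (fun n => (g n).2 z) U (𝓝 y) := by
    intro z
    by_cases hz : z ∈ ball (0 : ℂ) 1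
    · obtain ⟨C, hC⟩ := hb ‖z‖ (mem_ball_zero_iff.1 hz)
      obtain ⟨y, hy⟩ := U.exists_tendsto_of_eventually_norm_le
        (hC.mono fun n hn => hn z (by simp))
      exact ⟨y, fun _ => hy⟩
    · exact ⟨0, fun h => (hz h).elim⟩
  choose f hf using hpt
  have hloc := tendstoLocallyUniformlyOn_of_pointwise (hg.mono fun n hn => hn.1) hb hf
  have hdiff : DifferentiableOn ℂ f (ball 0 1) :=
    hloc.differentiableOn (hg.mono fun n hn => hn.1) isOpen_ball
  have h0 : (0 : ℂ) ∈ ball (0 : ℂ) 1 := mem_ball_self one_pos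
  have hderiv : Tendsto (fun n => deriv (g n).2 0) U (𝓝 (deriv f 0)) :=
    (hloc.deriv (hg.mono fun n hn => hn.1) isOpen_ball).tendsto_at h0
  have hf0 : f 0 = plim := tendsto_nhds_unique (hf 0 h0)
    ((hptend.mono_left hU).congr' (hg.mono fun n hn => hn.2.2.1.symm))
  have hfv : ξ • deriv f 0 = vlim := tendsto_nhds_unique (hξ.smul hderiv)
    ((hvtend.mono_left hU).congr' (hg.mono fun n hn => hn.2.2.2.1.symm))
  have hcl : MapsTo f (ball 0 1) (closure Ω) := by
    intro z hz
    rw [Metric.mem_closure_iff]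
    intro ε hε
    have hz' := hf z hz
    obtain ⟨n, hn, hnε, hnR, hnd⟩ := (hg.and ((Metric.tendsto_nhds.1 hz' (ε / 2) (by positivity)).and
      ((hz'.norm.eventually_lt_const (lt_add_one ‖f z‖)).and
        (hU (hconv.eventually_exists_dist_lt hp hptend (‖f z‖ + 1) (half_pos hε)))))).exists
    obtain ⟨y, hy, hyd⟩ := hnd.1 _ (hn.2.1 hz) hnR
    refine ⟨y, hy, ?_⟩
    have := dist_triangle (f z) ((g n).2 z) y
    rw [dist_comm (f z) ((g n).2 z)] at this
    linarith
  have hmaps := mapsTo_of_mapsTo_closure hΩ.1.2.1 hΩ.1.1 hdiff hcl (by rwa [hf0])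
  have hle : kob Ω plim vlim ≤ ‖ξ‖ :=
    csInf_le (bddBelow_kob Ω plim vlim) ⟨ξ, f, hdiff, hmaps, hf0, hfv, rfl⟩
  have hξc : ‖ξ‖ ≤ c := le_of_tendsto hξ.norm (hg.mono fun n hn => hn.2.2.2.2.le)
  linarith
end
end

section
/- Let Ω ⊂ ℂ^d be a convex domain containing no complex affine line, and let V ⊂ ℂ^d be a complex affine k-plane intersecting Ω. Then for every z ∈ V ∩ Ω and every vector v tangent to V (i.e., v in the direction space of V), one has k_Ω(z; v) ≤ k_{Ω ∩ V}(z; v) ≤ 2 k_Ω(z; v), where k_{Ω ∩ V}(z; v) is defined using holomorphic disks in ℂ^d whose image lies in Ω ∩ V. -/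
open Set Metric Filter Topology
open scoped ENNReal NNReal

noncomputable section

/-- **Schwarz lemma for a half-plane**: a holomorphic function on the unit disk with real part less
than `M` satisfies `‖deriv h 0‖ ≤ 2 * (M - (h 0).re)`. -/
theorem norm_deriv_zero_le_of_re_lt {h : ℂ → ℂ} {M : ℝ}
    (hd : DifferentiableOn ℂ h (ball 0 1)) (hM : ∀ x ∈ ball (0 : ℂ) 1, (h x).re < M) :
    ‖deriv h 0‖ ≤ 2 * (M - (h 0).re) := by
  have h0 : (0 : ℂ) ∈ ball (0 : ℂ) 1 := mem_ball_self one_pos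
  set m : ℝ := M - (h 0).re with hm
  have hm_pos : 0 < m := sub_pos.2 (hM 0 h0)
  have hre : ∀ x ∈ ball (0 : ℂ) 1, 0 < (2 * m - (h x - h 0)).re := by
    intro x hx
    have := hM x hx
    simp only [Complex.sub_re, Complex.mul_re, Complex.re_ofNat, Complex.im_ofNat,
      Complex.ofReal_re, Complex.ofReal_im]
    linarith
  have hne : ∀ x ∈ ball (0 : ℂ) 1, 2 * (m : ℂ) - (h x - h 0) ≠ 0 := fun x hx hx0 ↦ by
    simpa [hx0] using hre x hx
  set g : ℂ → ℂ := fun x ↦ (h x - h 0) / (2 * m - (h x - h 0)) with hg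
  have hgd : DifferentiableOn ℂ g (ball 0 1) :=
    (hd.sub_const _).div ((hd.sub_const _).const_sub _) hne
  have hg0 : g 0 = 0 := by simp [hg]
  have hmaps : MapsTo g (ball 0 1) (closedBall (g 0) 1) := by
    intro x hx
    rw [hg0, mem_closedBall_zero_iff, hg, norm_div, div_le_one (norm_pos_iff.2 (hne x hx)),
      ← sq_le_sq₀ (norm_nonneg _) (norm_nonneg _), Complex.sq_norm, Complex.sq_norm,
      Complex.normSq_apply, Complex.normSq_apply]
    have := hM x hx
    simp only [Complex.sub_re, Complex.sub_im, Complex.mul_re, Complex.mul_im, Complex.re_ofNat,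
      Complex.im_ofNat, Complex.ofReal_re, Complex.ofReal_im]
    nlinarith
  have hschwarz := Complex.norm_deriv_le_one_of_mapsTo_ball hgd hmaps one_pos
  have hh : HasDerivAt h (deriv h 0) 0 :=
    (hd.differentiableAt (isOpen_ball.mem_nhds h0)).hasDerivAt
  have hgderiv : deriv g 0 = deriv h 0 / (2 * m) := by
    refine ((hh.sub_const (h 0)).div ((hh.sub_const (h 0)).const_sub (2 * (m : ℂ)))
      (hne 0 h0)).deriv.trans ?_
    have : (m : ℂ) ≠ 0 := by exact_mod_cast hm_pos.ne'
    simp only [sub_self, sub_zero, zero_mul]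
    field_simp
  rwa [hgderiv, norm_div, norm_mul, Complex.norm_ofNat, Complex.norm_real, Real.norm_eq_abs,
    abs_of_pos hm_pos, div_le_one (by positivity)] at hschwarz

section Kobayashi

variable {E : Type*} [NormedAddCommGroup E] [NormedSpace ℂ E]

/-- A convex open set containing a holomorphic disk also contains the affine disk with the same
centre and half its derivative. -/
theorem Convex.add_smul_half_deriv_mem {Ω : Set E} (ho : IsOpen Ω) (hc : Convex ℝ Ω) {f : ℂ → E}
    (hd : DifferentiableOn ℂ f (ball 0 1)) (hf : MapsTo f (ball 0 1) Ω) {lam : ℂ}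
    (hlam : ‖lam‖ < 1) : f 0 + lam • (2⁻¹ : ℂ) • deriv f 0 ∈ Ω := by
  by_contra hx
  obtain ⟨l, hl⟩ := RCLike.geometric_hahn_banach_open_point (𝕜 := ℂ) hc ho hx
  have h0 : (0 : ℂ) ∈ ball (0 : ℂ) 1 := mem_ball_self one_pos
  have hderiv : HasDerivAt (fun x ↦ l (f x)) (l (deriv f 0)) 0 :=
    l.hasFDerivAt.comp_hasDerivAt 0 (hd.differentiableAt (isOpen_ball.mem_nhds h0)).hasDerivAt
  have hbound := norm_deriv_zero_le_of_re_lt (h := fun x ↦ l (f x))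
    (l.differentiable.comp_differentiableOn hd) (fun x hx ↦ hl _ (hf hx))
  rw [hderiv.deriv] at hbound
  have hlt := hl _ (hf h0)
  simp only [map_add, map_smul, smul_eq_mul, RCLike.re_to_complex] at hbound hlt
  have hre : (lam * (2⁻¹ * l (deriv f 0))).re ≤ ‖lam‖ * (2⁻¹ * ‖l (deriv f 0)‖) := by
    simpa using Complex.re_le_norm (lam * (2⁻¹ * l (deriv f 0)))
  have hpos : 0 < ‖l (deriv f 0)‖ := by
    refine (norm_nonneg _).lt_of_ne' fun h ↦ ?_
    rw [h] at hre
    linarith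
  nlinarith [mul_pos (sub_pos.2 hlam) hpos]

/-- An affine disk in `S` bounds the Kobayashi metric of `S` from above. -/
theorem affineDisk_mem_kob_set {S : Set E} {z w v : E} {ξ : ℂ}
    (hS : ∀ lam : ℂ, ‖lam‖ < 1 → z + lam • w ∈ S) (hv : ξ • w = v) :
    ‖ξ‖ ∈ { c : ℝ | ∃ (ξ : ℂ) (f : ℂ → E),
      DifferentiableOn ℂ f (Metric.ball 0 1) ∧ MapsTo f (Metric.ball 0 1) S ∧
      f 0 = z ∧ ξ • deriv f 0 = v ∧ c = ‖ξ‖ } := by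
  have hderiv : HasDerivAt (fun lam : ℂ ↦ z + lam • w) w 0 := by
    simpa using ((hasDerivAt_id (0 : ℂ)).smul_const w).const_add z
  exact ⟨ξ, fun lam ↦ z + lam • w, by fun_prop, fun lam hlam ↦ hS lam (mem_ball_zero_iff.1 hlam),
    by simp, by rw [hderiv.deriv, hv], rfl⟩

theorem bddBelow_kob_set (S : Set E) (z v : E) :
    BddBelow { c : ℝ | ∃ (ξ : ℂ) (f : ℂ → E),
      DifferentiableOn ℂ f (Metric.ball 0 1) ∧ MapsTo f (Metric.ball 0 1) S ∧
      f 0 = z ∧ ξ • deriv f 0 = v ∧ c = ‖ξ‖ } :=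
  ⟨0, by rintro _ ⟨ξ, _, _, _, _, _, rfl⟩; exact norm_nonneg ξ⟩

/-- A point of an open set is the centre of a nondegenerate affine disk in any direction. -/
theorem IsOpen.exists_affineDisk_subset {Ω : Set E} (ho : IsOpen Ω) {z : E} (hz : z ∈ Ω) (v : E) :
    ∃ r : ℂ, r ≠ 0 ∧ ∀ lam : ℂ, ‖lam‖ < 1 → z + lam • r • v ∈ Ω := by
  have hcont : Continuous fun lam : ℂ ↦ z + lam • v := by fun_prop
  obtain ⟨ε, hε, hball⟩ := Metric.isOpen_iff.1 (ho.preimage hcont) 0 (by simpa using hz)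
  refine ⟨ε, by exact_mod_cast hε.ne', fun lam hlam ↦ ?_⟩
  rw [smul_smul]
  refine hball (mem_ball_zero_iff.2 ?_)
  rw [norm_mul, Complex.norm_real, Real.norm_eq_abs, abs_of_pos hε]
  nlinarith

end Kobayashi

/-- For `Ω ∈ 𝕏_d` and a complex affine `k`-plane `V = p + W` meeting `Ω`,
`k_Ω(z;v) ≤ k_{Ω ∩ V}(z;v) ≤ 2 k_Ω(z;v)` for all `z ∈ V ∩ Ω` and `v` tangent to `V`. -/
theorem statement11 (d k : ℕ) (Ω : Set (EuclideanSpace ℂ (Fin d))) (hΩ : InX Ω)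
    (p : EuclideanSpace ℂ (Fin d)) (W : Submodule ℂ (EuclideanSpace ℂ (Fin d)))
    (hW : Module.finrank ℂ W = k)
    (V : Set (EuclideanSpace ℂ (Fin d))) (hV : V = {x | x - p ∈ W})
    (hmeet : (V ∩ Ω).Nonempty)
    (z : EuclideanSpace ℂ (Fin d)) (hz : z ∈ V ∩ Ω)
    (v : EuclideanSpace ℂ (Fin d)) (hv : v ∈ W) :
    kob Ω z v ≤ kob (Ω ∩ V) z v ∧ kob (Ω ∩ V) z v ≤ 2 * kob Ω z v := by
  obtain ⟨⟨ho, hc, -⟩, -⟩ := hΩ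
  subst hV
  have hdir : ∀ w ∈ W, ∀ lam : ℂ, z + lam • w ∈ {x | x - p ∈ W} := fun w hw lam ↦ by
    have := W.add_mem hz.1 (W.smul_mem lam hw)
    rwa [sub_add_eq_add_sub] at this
  obtain ⟨r, hr, hdisk⟩ := ho.exists_affineDisk_subset hz.2 v
  have hmem := affineDisk_mem_kob_set (S := Ω ∩ {x | x - p ∈ W}) (z := z) (w := r • v) (ξ := r⁻¹)
    (fun lam hlam ↦ ⟨hdisk lam hlam, hdir _ (W.smul_mem r hv) lam⟩) (inv_smul_smul₀ hr v)
  have hsub : kob Ω z v ≤ kob (Ω ∩ {x | x - p ∈ W}) z v := by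
    refine csInf_le_csInf (bddBelow_kob_set _ _ _) ⟨_, hmem⟩ ?_
    rintro _ ⟨ξ, f, hd, hf, h0, hξ, rfl⟩
    exact ⟨ξ, f, hd, fun x hx ↦ (hf hx).1, h0, hξ, rfl⟩
  refine ⟨hsub, ?_⟩
  rw [← div_le_iff₀' two_pos]
  refine le_csInf ⟨_, affineDisk_mem_kob_set hdisk (inv_smul_smul₀ hr v)⟩ ?_
  rintro _ ⟨ξ, f, hd, hf, h0, hξ, rfl⟩
  rw [div_le_iff₀' two_pos]
  obtain rfl | hξ0 := eq_or_ne ξ 0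
  · have hv0 : v = 0 := by simpa using hξ.symm
    refine csInf_le (bddBelow_kob_set _ _ _) ?_
    simpa using affineDisk_mem_kob_set (S := Ω ∩ {x | x - p ∈ W}) (z := z) (w := 0) (v := v)
      (ξ := 0) (fun lam _ ↦ by simpa using hz.symm) (by simp [hv0])
  · have hfW : deriv f 0 ∈ W := by
      rw [← inv_smul_smul₀ hξ0 (deriv f 0), hξ]
      exact W.smul_mem _ hv
    have hhalf : (2 * ξ) • (2⁻¹ : ℂ) • deriv f 0 = v := by
      rw [smul_smul, mul_right_comm, mul_inv_cancel₀ two_ne_zero, one_mul, hξ]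
    have hmem_half := affineDisk_mem_kob_set (S := Ω ∩ {x | x - p ∈ W}) (z := z)
      (fun lam hlam ↦ ⟨h0 ▸ Convex.add_smul_half_deriv_mem ho hc hd hf hlam,
        hdir _ (W.smul_mem _ hfW) lam⟩) hhalf
    exact (csInf_le (bddBelow_kob_set _ _ _) hmem_half).trans_eq (by simp)
end
end

section
/- Fix α ∈ (0,1) and d ≥ 2, and let 𝕃_{d,α} be the set of convex domains 𝒞 ⊂ ℂ^d containing no complex affine line such that: (1) 𝒞 ∈ 𝕂_d; (2) (ℂ·e_1) ∩ 𝒞 = { z·e_1 : z ∈ ℂ, Im z > 0 }; and (3) δ_𝒞(r·i·e_1; e_2) ≤ r^{1/(2+α)} for all r ≥ 1. Then 𝕃_{d,α} is compact: every sequence of domains in 𝕃_{d,α} has a subsequence converging in the local Hausdorff topology to a domain belonging to 𝕃_{d,α}. -/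
open Set Metric Filter Topology
open scoped ENNReal NNReal

noncomputable section

/-- The square `𝔻₁ = {z : |Re z| + |Im z| < 1}`. -/
def D1set : Set ℂ := {z : ℂ | |z.re| + |z.im| < 1}

/-- The planes `Z_1, …, Z_d` (indexed here by `Fin d`): `Z_1 = span{e_2, …, e_d}` and,
for `2 ≤ j ≤ d`, `Z_j = i e_1 + e_j + span{e_{j+1}, …, e_d}`. -/
def Zset (d : ℕ) [NeZero d] (m : Fin d) : Set (EuclideanSpace ℂ (Fin d)) :=
  if m = 0 then {z | z 0 = 0}
  else {z | z 0 = Complex.I ∧ z m = 1 ∧ ∀ k : Fin d, 0 < k → k < m → z k = 0}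

/-- The family `𝕂_d`: convex domains `Ω ∈ 𝕏_d` with `Z_i ∩ Ω = ∅` and
`i e_1 + 𝔻₁·e_i ⊆ Ω` for all `i = 1, …, d`. -/
def Kd (d : ℕ) [NeZero d] : Set (Set (EuclideanSpace ℂ (Fin d))) :=
  {Ω | InX Ω ∧ ∀ m : Fin d,
    Zset d m ∩ Ω = ∅ ∧
    ∀ w ∈ D1set,
      Complex.I • EuclideanSpace.single (0 : Fin d) (1:ℂ) +
        w • EuclideanSpace.single m (1:ℂ) ∈ Ω}

/-- The family `𝕃_{d,α}`: domains `𝒞 ∈ 𝕂_d` with `(ℂ·e_1) ∩ 𝒞 = {z·e_1 : Im z > 0}`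
and `δ_𝒞(r i e_1; e_2) ≤ r^{1/(2+α)}` for all `r ≥ 1`. -/
def Ld (d : ℕ) [NeZero d] (hd : 1 < d) (α : ℝ) : Set (Set (EuclideanSpace ℂ (Fin d))) :=
  {C | C ∈ Kd d ∧
    (Set.range (fun z : ℂ => z • EuclideanSpace.single (0 : Fin d) (1:ℂ)) ∩ C =
      (fun z : ℂ => z • EuclideanSpace.single (0 : Fin d) (1:ℂ)) '' {z : ℂ | 0 < z.im}) ∧
    ∀ r : ℝ, 1 ≤ r →
      distInDir C (((r : ℂ) * Complex.I) • EuclideanSpace.single (0 : Fin d) (1:ℂ))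
          (EuclideanSpace.single (⟨1, hd⟩ : Fin d) (1:ℂ)) ≤
        ENNReal.ofReal (r ^ (1 / (2 + α)))}

/-- A sequence of sets avoiding a common point has a subsequence converging to an open set `C`
in the sense of kernels: compact subsets of `C` are eventually contained in the sets, and centres
of balls of fixed radius contained in the sets eventually belong to `C`, uniformly on compacts. -/
theorem exists_subseq_kernel_convergence {E : Type*} [NormedAddCommGroup E] [ProperSpace E]
    (S : ℕ → Set E) (x₀ : E) (hx₀ : ∀ n, x₀ ∉ S n) :
    ∃ φ : ℕ → ℕ, StrictMono φ ∧ ∃ C : Set E, IsOpen C ∧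
      (∀ K ⊆ C, IsCompact K → ∀ᶠ n in atTop, K ⊆ S (φ n)) ∧
      (∀ t : ℝ, 0 < t → ∀ K : Set E, IsCompact K →
        ∀ᶠ n in atTop, ∀ y ∈ K, ball y t ⊆ S (φ n) → y ∈ C) := by
  let f : ℕ → C(E, ℝ) := fun n => ⟨fun x => infDist x (S n)ᶜ, continuous_infDist_pt _⟩
  let A : Set C(E, ℝ) := {g | LipschitzWith 1 g ∧ ∀ x, g x ∈ Icc 0 (dist x x₀)}
  have hfA : ∀ n, f n ∈ A := fun n =>
    ⟨lipschitz_infDist_pt _, fun x => ⟨infDist_nonneg, infDist_le_dist_of_mem (hx₀ n)⟩⟩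
  have hA : IsCompact A := by
    apply ArzelaAscoli.isCompact_of_equicontinuous
    · have : ContinuousMap.toFun '' A =
          {g : E → ℝ | LipschitzWith 1 g} ∩ Set.pi univ (fun x => Icc 0 (dist x x₀)) := by
        ext g
        constructor
        · rintro ⟨g, hg, rfl⟩
          exact ⟨hg.1, fun x _ => hg.2 x⟩
        · rintro ⟨h1, h2⟩
          exact ⟨⟨g, h1.continuous⟩, ⟨h1, fun x => h2 x (mem_univ x)⟩, rfl⟩
      rw [this]
      exact (isCompact_univ_pi fun _ => isCompact_Icc).inter_left (isClosed_setOfPred_lipschitzWith 1)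
    · apply UniformEquicontinuous.equicontinuous
      exact LipschitzWith.uniformEquicontinuous _ 1 fun g => g.2.1
  obtain ⟨g, -, φ, hφ, hlim⟩ := hA.tendsto_subseq hfA
  rw [ContinuousMap.tendsto_iff_forall_isCompact_tendstoUniformlyOn] at hlim
  refine ⟨φ, hφ, {x | 0 < g x}, isOpen_lt continuous_const g.continuous, ?_, ?_⟩
  · intro K hKC hK
    rcases K.eq_empty_or_nonempty with rfl | hne
    · simp
    obtain ⟨z, hz, hmin⟩ := hK.exists_isMinOn hne g.continuous.continuousOn
    filter_upwards [Metric.tendstoUniformlyOn_iff.1 (hlim K hK) (g z) (hKC hz)] with n hn y hy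
    by_contra hyS
    have h0 : f (φ n) y = 0 := infDist_zero_of_mem hyS
    have h1 := hn y hy
    have h2 : g z ≤ g y := hmin hy
    simp only [Function.comp_apply, h0, dist_zero_right, Real.norm_eq_abs] at h1
    linarith [le_abs_self (g y)]
  · intro t ht K hK
    filter_upwards [Metric.tendstoUniformlyOn_iff.1 (hlim K hK) t ht] with n hn y hy hball
    have h1 := hn y hy
    have h2 : t ≤ f (φ n) y := by
      refine (le_infDist ⟨x₀, hx₀ _⟩).2 fun w hw => ?_
      by_contra! hlt
      exact hw (hball (by rwa [mem_ball, dist_comm]))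
    rw [Real.dist_eq, Function.comp_apply] at h1
    change 0 < g y
    linarith [(abs_lt.1 h1).1]

/-- A convex set containing a point and a ball contains a ball around each point of the segment
joining the point to the centre. -/
theorem Convex.ball_segment_subset {E : Type*} [NormedAddCommGroup E] [NormedSpace ℝ E]
    {S : Set E} (hS : Convex ℝ S) {p x : E} {r t : ℝ} (hp : ball p r ⊆ S) (hx : x ∈ S)
    (ht : 0 < t) (ht1 : t ≤ 1) : ball ((1 - t) • x + t • p) (t * r) ⊆ S := by
  intro y hy
  have h1 : p + t⁻¹ • (y - ((1 - t) • x + t • p)) ∈ S := by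
    apply hp
    rw [mem_ball, dist_eq_norm] at hy ⊢
    rw [add_sub_cancel_left, norm_smul, norm_inv, Real.norm_of_nonneg ht.le,
      inv_mul_lt_iff₀ ht]
    exact hy
  have h2 := hS hx h1 (sub_nonneg.2 ht1) ht.le (by ring)
  rw [smul_add, smul_inv_smul₀ ht.ne'] at h2
  convert h2 using 1
  module

/-- Kernel convergence of convex sets containing a common ball implies convergence in the local
Hausdorff topology. -/
theorem locHausConv_of_kernel_convergence {E : Type*} [NormedAddCommGroup E] [NormedSpace ℂ E]
    [ProperSpace E] {S : ℕ → Set E} {C : Set E} (hS : ∀ n, Convex ℝ (S n))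
    {p : E} {r : ℝ} (hr : 0 < r) (hp : ∀ n, ball p r ⊆ S n)
    (h₁ : ∀ K ⊆ C, IsCompact K → ∀ᶠ n in atTop, K ⊆ S n)
    (h₂ : ∀ t : ℝ, 0 < t → ∀ K : Set E, IsCompact K →
        ∀ᶠ n in atTop, ∀ y ∈ K, ball y t ⊆ S n → y ∈ C) :
    LocHausConv S C := by
  refine ⟨‖p‖ + 1, by positivity, fun R hR => ?_⟩
  have hpR : p ∈ ball (0 : E) R := by rw [mem_ball_zero_iff]; linarith
  have hR0 : 0 < R := by linarith [norm_nonneg p]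
  rw [Metric.tendsto_atTop']
  intro ε hε
  obtain ⟨N, hN⟩ : ∃ N, ∀ n ≥ N, hausdorffDist (S n ∩ ball 0 R) (C ∩ ball 0 R) ≤ ε / 2 := by
    rw [← eventually_atTop]
    have htb : TotallyBounded (C ∩ ball 0 R) :=
      (isCompact_closedBall (0 : E) R).totallyBounded.subset
        (inter_subset_right.trans ball_subset_closedBall)
    obtain ⟨T, hTC, hT, hcov⟩ := finite_approx_of_totallyBounded htb (ε / 2) (half_pos hε)
    obtain ⟨t, ht, ht1, htR⟩ : ∃ t : ℝ, 0 < t ∧ t ≤ 1 ∧ t * (2 * R) ≤ ε / 2 := by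
      refine ⟨min 1 (ε / (4 * R)), by positivity, min_le_left _ _, ?_⟩
      calc min 1 (ε / (4 * R)) * (2 * R) ≤ ε / (4 * R) * (2 * R) := by
            gcongr; exact min_le_right _ _
        _ = ε / 2 := by field_simp; norm_num
    filter_upwards [h₁ T (hTC.trans inter_subset_left) hT.isCompact,
      h₂ (t * r) (by positivity) _ (isCompact_closedBall (0 : E) R)] with n hn1 hn2
    apply hausdorffDist_le_of_mem_dist (half_pos hε).le
    · rintro x ⟨hxS, hxR⟩
      have hy : (1 - t) • x + t • p ∈ ball (0 : E) R :=
        convex_ball (0 : E) R hxR hpR (sub_nonneg.2 ht1) ht.le (by ring)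
      refine ⟨(1 - t) • x + t • p, ⟨hn2 _ (ball_subset_closedBall hy)
        ((hS n).ball_segment_subset (hp n) hxS ht ht1), hy⟩, ?_⟩
      have : x - ((1 - t) • x + t • p) = t • (x - p) := by module
      rw [dist_eq_norm, this, norm_smul, Real.norm_of_nonneg ht.le]
      rw [mem_ball_zero_iff] at hxR hpR
      have := norm_sub_le x p
      nlinarith
    · intro x hx
      obtain ⟨y, hyT, hxy⟩ := mem_iUnion₂.1 (hcov hx)
      exact ⟨y, ⟨hn1 hyT, (hTC hyT).2⟩, (mem_ball.1 hxy).le⟩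
  refine ⟨N, fun n hn => ?_⟩
  rw [Real.dist_0_eq_abs, abs_of_nonneg hausdorffDist_nonneg]
  linarith [hN n hn.le]

/-- Kernel limits of convex sets are convex. -/
theorem convex_of_kernel_convergence {E : Type*} [NormedAddCommGroup E] [NormedSpace ℝ E]
    [ProperSpace E] {S : ℕ → Set E} {C : Set E} (hS : ∀ n, Convex ℝ (S n)) (hC : IsOpen C)
    (h₁ : ∀ K ⊆ C, IsCompact K → ∀ᶠ n in atTop, K ⊆ S n)
    (h₂ : ∀ t : ℝ, 0 < t → ∀ K : Set E, IsCompact K →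
        ∀ᶠ n in atTop, ∀ y ∈ K, ball y t ⊆ S n → y ∈ C) :
    Convex ℝ C := by
  intro x hx y hy a b ha hb hab
  obtain ⟨r, hr, hxr⟩ := Metric.nhds_basis_closedBall.mem_iff.1 (hC.mem_nhds hx)
  obtain ⟨s, hs, hys⟩ := Metric.nhds_basis_closedBall.mem_iff.1 (hC.mem_nhds hy)
  obtain ⟨n, hn1, hn2, hn3⟩ := ((h₁ _ hxr (isCompact_closedBall x r)).and
    ((h₁ _ hys (isCompact_closedBall y s)).and
      (h₂ (min r s) (lt_min hr hs) {a • x + b • y} isCompact_singleton))).exists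
  refine hn3 _ rfl fun z hz => ?_
  rw [mem_ball, dist_eq_norm] at hz
  have hx' : x + (z - (a • x + b • y)) ∈ S n := hn1 (by
    rw [mem_closedBall, dist_eq_norm, add_sub_cancel_left]
    exact (hz.trans_le (min_le_left _ _)).le)
  have hy' : y + (z - (a • x + b • y)) ∈ S n := hn2 (by
    rw [mem_closedBall, dist_eq_norm, add_sub_cancel_left]
    exact (hz.trans_le (min_le_right _ _)).le)
  have := hS n hx' hy' ha hb hab
  convert this using 1
  have hb' : b = 1 - a := by linarith
  subst hb'
  module

/-- An open convex set containing a complex line contains all its translates through points of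
the set. -/
theorem IsOpen.complex_line_translate_mem {E : Type*} [NormedAddCommGroup E] [NormedSpace ℂ E]
    {C : Set E} (hC : IsOpen C) (hconv : Convex ℝ C) {a b p : E}
    (hline : ∀ lam : ℂ, a + lam • b ∈ C) (hp : p ∈ C) (lam : ℂ) : p + lam • b ∈ C := by
  have hcont : ContinuousAt (fun t : ℝ => (1 - t)⁻¹ • (p - t • a)) 0 := by
    have h1 : ContinuousAt (fun t : ℝ => (1 - t)⁻¹) 0 :=
      ContinuousAt.inv₀ (f := fun t : ℝ => 1 - t) (by fun_prop) (by norm_num)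
    have h2 : ContinuousAt (fun t : ℝ => p - t • a) 0 := by fun_prop
    exact h1.smul h2
  have hev : ∀ᶠ t : ℝ in 𝓝[>] 0, (1 - t)⁻¹ • (p - t • a) ∈ C :=
    (hcont.eventually (hC.mem_nhds (by simpa using hp))).filter_mono nhdsWithin_le_nhds
  obtain ⟨t, htC, ht0, ht1⟩ := (hev.and (Ioo_mem_nhdsGT (zero_lt_one' ℝ))).exists
  have h := hconv htC (hline ((t : ℂ)⁻¹ * lam)) (sub_nonneg.2 ht1.le) ht0.le (by ring)
  rw [smul_inv_smul₀ (sub_pos.2 ht1).ne', smul_add, ← Complex.coe_smul t (_ • b), smul_smul,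
    mul_inv_cancel_left₀ (by exact_mod_cast ht0.ne')] at h
  convert h using 1
  abel

/-- If a point of `C` is farther than `ρ` from the boundary in the direction `v`, some closed
disc of radius larger than `ρ` in that direction lies in `C`. -/
theorem exists_closedBall_inter_line_subset {E : Type*} [NormedAddCommGroup E] [NormedSpace ℂ E]
    {C : Set E} (hC : IsOpen C) {z v : E} (hz : z ∈ C) {ρ : ℝ} (h : ENNReal.ofReal ρ < distInDir C z v) :
    ∃ ρ' : ℝ, ENNReal.ofReal ρ < ENNReal.ofReal ρ' ∧
      {x | ∃ lam : ℂ, x = z + lam • v} ∩ closedBall z ρ' ⊆ C := by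
  obtain ⟨c, hc1, hc2⟩ := ENNReal.lt_iff_exists_nnreal_btwn.1 h
  refine ⟨c, by simpa using hc1, ?_⟩
  rintro _ ⟨⟨lam, rfl⟩, hx⟩
  by_contra hxC
  have hpre : IsPreconnected (segment ℝ z (z + lam • v)) := (convex_segment _ _).isPreconnected
  obtain ⟨y, hy, hyC⟩ : (segment ℝ z (z + lam • v) ∩ frontier C).Nonempty := by
    by_contra hne
    have hsub := hpre.subset_left_of_subset_union hC isClosed_closure.isOpen_compl
      (disjoint_compl_right.mono_left subset_closure)
      (fun y hy => by
        by_contra hy'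
        rw [mem_union, not_or, notMem_compl_iff] at hy'
        exact hne ⟨y, hy, by rw [hC.frontier_eq]; exact ⟨hy'.2, hy'.1⟩⟩)
      ⟨z, left_mem_segment ℝ _ _, hz⟩
    exact hxC (hsub (right_mem_segment ℝ _ _))
  have hyball : y ∈ closedBall z (c : ℝ) :=
    (convex_closedBall z (c : ℝ)).segment_subset (mem_closedBall_self c.2) hx hy
  have hyline : ∃ lam : ℂ, y = z + lam • v := by
    obtain ⟨s, -, rfl⟩ := (segment_eq_image' ℝ z (z + lam • v)) ▸ hy
    exact ⟨s * lam, by rw [add_sub_cancel_left, mul_smul, Complex.coe_smul]⟩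
  have h1 : distInDir C z v ≤ edist z y := infEDist_le_edist_of_mem ⟨hyline, hyC⟩
  have h2 : edist z y ≤ c := by
    rw [edist_comm, edist_nndist]
    exact_mod_cast hyball
  exact absurd (hc2.trans_le (h1.trans h2)) (lt_irrefl _)

/-- Bounds on the distance to the boundary in a given direction pass to kernel limits. -/
theorem distInDir_le_of_kernel_convergence {E : Type*} [NormedAddCommGroup E] [NormedSpace ℂ E]
    [ProperSpace E] {S : ℕ → Set E} {C : Set E} (hS : ∀ n, IsOpen (S n)) (hC : IsOpen C)
    (h₁ : ∀ K ⊆ C, IsCompact K → ∀ᶠ n in atTop, K ⊆ S n) {z v : E} (hz : z ∈ C) {ρ : ℝ}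
    (h : ∀ n, distInDir (S n) z v ≤ ENNReal.ofReal ρ) : distInDir C z v ≤ ENNReal.ofReal ρ := by
  by_contra! hlt
  obtain ⟨ρ', hρ, hsub⟩ := exists_closedBall_inter_line_subset hC hz hlt
  have hline : IsClosed {x | ∃ lam : ℂ, x = z + lam • v} := by
    have : {x | ∃ lam : ℂ, x = z + lam • v} =
        (fun x => x - z) ⁻¹' (Submodule.span ℂ {v} : Submodule ℂ E) := by
      ext x
      simp only [mem_ofPred_eq, mem_preimage, SetLike.mem_coe, Submodule.mem_span_singleton]
      exact exists_congr fun lam => by rw [eq_sub_iff_add_eq', eq_comm]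
    rw [this]
    exact (Submodule.closed_of_finiteDimensional _).preimage (by fun_prop)
  obtain ⟨n, hn⟩ := (h₁ _ hsub ((isCompact_closedBall z ρ').inter_left hline)).exists
  have hle : ENNReal.ofReal ρ' ≤ distInDir (S n) z v := by
    refine le_infEDist.2 fun y hy => ?_
    by_contra! hlt'
    rw [edist_comm, edist_dist] at hlt'
    have hyS : y ∈ S n := hn ⟨hy.1, ((ENNReal.ofReal_lt_ofReal_iff').1 hlt').1.le⟩
    have := hy.2
    rw [(hS n).frontier_eq] at this
    exact this.2 hyS
  exact absurd (hρ.trans_le (hle.trans (h n))) (lt_irrefl _)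

/-- A convex set containing the discs `i e_1 + 𝔻₁·e_m` contains a ball around `i e_1`. -/
theorem ball_subset_of_D1set_discs {d : ℕ} [NeZero d] {S : Set (EuclideanSpace ℂ (Fin d))}
    (hS : Convex ℝ S) {p : EuclideanSpace ℂ (Fin d)}
    (h : ∀ m : Fin d, ∀ w ∈ D1set, p + w • EuclideanSpace.single m (1 : ℂ) ∈ S) :
    ball p (1 / (2 * d)) ⊆ S := by
  have hd : (0 : ℝ) < d := by exact_mod_cast Nat.pos_of_ne_zero (NeZero.ne d)
  intro y hy
  have hmem : ∀ m ∈ (Finset.univ : Finset (Fin d)),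
      p + ((d : ℂ) * (y - p) m) • EuclideanSpace.single m (1 : ℂ) ∈ S := by
    intro m _
    apply h
    have h1 : ‖(d : ℂ) * (y - p) m‖ < 1 / 2 := by
      rw [norm_mul, Complex.norm_natCast]
      have h2 : ‖(y - p) m‖ < 1 / (2 * d) :=
        (PiLp.norm_apply_le (y - p) m).trans_lt (by rwa [mem_ball, dist_eq_norm] at hy)
      rw [lt_div_iff₀ (by positivity)] at h2
      linarith
    have h3 := Complex.abs_re_le_norm ((d : ℂ) * (y - p) m)
    have h4 := Complex.abs_im_le_norm ((d : ℂ) * (y - p) m)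
    change _ + _ < (1 : ℝ)
    linarith
  have hsum := hS.sum_mem (w := fun _ => (1 / d : ℝ)) (fun _ _ => by positivity)
    (by simp [hd.ne']) hmem
  convert hsum using 1
  ext k
  have hd' : (d : ℂ) ≠ 0 := by exact_mod_cast hd.ne'
  simp [Finset.sum_add_distrib, Pi.single_apply, hd']

/-- An open convex set that contains `i e_1` and avoids the planes `Z_m` contains no complex line, since
every complex line through `i e_1` meets one of these planes. -/
theorem noComplexLine_of_Zset {d : ℕ} [NeZero d] {C : Set (EuclideanSpace ℂ (Fin d))}
    (hC : IsOpen C) (hconv : Convex ℝ C)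
    (hp : Complex.I • EuclideanSpace.single (0 : Fin d) (1 : ℂ) ∈ C)
    (hZ : ∀ m : Fin d, Zset d m ∩ C = ∅) : NoComplexLine C := by
  intro a b hb hline
  have hmem := hC.complex_line_translate_mem hconv hline hp
  by_cases h0 : b 0 = 0
  · obtain ⟨m, hm, hmin⟩ : ∃ m : Fin d, b m ≠ 0 ∧ ∀ k < m, b k = 0 := by
      have hne : ∃ m, b m ≠ 0 := by
        by_contra! hall
        exact hb (PiLp.ext hall)
      obtain ⟨m, hm, hmin⟩ := WellFounded.has_min (wellFounded_lt (α := Fin d)) {m | b m ≠ 0} hne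
      exact ⟨m, hm, fun k hk => by_contra fun hk' => hmin k hk' hk⟩
    have hm0 : m ≠ 0 := fun h => hm (h ▸ h0)
    refine (hZ m).subset ⟨?_, hmem (b m)⁻¹⟩
    rw [Zset, if_neg hm0]
    refine ⟨by simp [h0], by simp [hm0, hm], fun k hk hkm => ?_⟩
    simp [hk.ne', hmin k hkm]
  · refine (hZ 0).subset ⟨?_, hmem (-Complex.I / b 0)⟩
    rw [Zset, if_pos rfl]
    simp [h0]

/-- for `α ∈ (0,1)` and `d ≥ 2`, the family `𝕃_{d,α}` is compact: every
sequence in `𝕃_{d,α}` has a subsequence converging in the local Hausdorff topology to a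
domain belonging to `𝕃_{d,α}`. -/
theorem statement13 (d : ℕ) [NeZero d] (hd : 1 < d) (α : ℝ) (hα : α ∈ Set.Ioo (0:ℝ) 1)
    (Cn : ℕ → Set (EuclideanSpace ℂ (Fin d))) (h : ∀ n, Cn n ∈ Ld d hd α) :
    ∃ φ : ℕ → ℕ, StrictMono φ ∧ ∃ C ∈ Ld d hd α, LocHausConv (fun j => Cn (φ j)) C := by
  set p : EuclideanSpace ℂ (Fin d) := Complex.I • EuclideanSpace.single (0 : Fin d) (1 : ℂ)
    with hp
  have hopen : ∀ n, IsOpen (Cn n) := fun n => (h n).1.1.1.1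
  have hconv : ∀ n, Convex ℝ (Cn n) := fun n => (h n).1.1.1.2.1
  have hball : ∀ n, ball p (1 / (2 * d)) ⊆ Cn n := fun n =>
    ball_subset_of_D1set_discs (hconv n) fun m => ((h n).1.2 m).2
  have hr : (0 : ℝ) < 1 / (2 * d) := by
    have : (0 : ℝ) < d := by exact_mod_cast Nat.pos_of_ne_zero (NeZero.ne d)
    positivity
  have h0 : ∀ n, (0 : EuclideanSpace ℂ (Fin d)) ∉ Cn n := fun n hn =>
    ((h n).1.2 0).1.subset ⟨by simp [Zset], hn⟩
  have hax : ∀ n (z : ℂ), z • EuclideanSpace.single (0 : Fin d) (1 : ℂ) ∈ Cn n ↔ 0 < z.im := by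
    intro n z
    constructor
    · intro hz
      obtain ⟨w, hw, hwz⟩ := (h n).2.1.subset ⟨⟨z, rfl⟩, hz⟩
      have := congrArg (fun x : EuclideanSpace ℂ (Fin d) => x 0) hwz
      simp only [PiLp.smul_apply, PiLp.single_apply, if_true, smul_eq_mul, mul_one] at this
      exact this ▸ hw
    · intro hz
      exact ((h n).2.1.superset ⟨z, hz, rfl⟩).2
  obtain ⟨φ, hφ, C, hC, h₁, h₂⟩ := exists_subseq_kernel_convergence Cn 0 h0
  have hnot : ∀ x, (∀ n, x ∉ Cn n) → x ∉ C := by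
    intro x hx hxC
    obtain ⟨n, hn⟩ := (h₁ {x} (singleton_subset_iff.2 hxC) isCompact_singleton).exists
    exact hx _ (hn rfl)
  have hmem : ∀ (t : ℝ) (x : EuclideanSpace ℂ (Fin d)), 0 < t → t ≤ 1 → (∀ n, x ∈ Cn n) →
      (1 - t) • x + t • p ∈ C := by
    intro t x ht ht1 hx
    obtain ⟨n, hn⟩ := (h₂ (t * (1 / (2 * d))) (by positivity) _ isCompact_singleton).exists
    exact hn _ rfl ((hconv _).ball_segment_subset (hball _) (hx _) ht ht1)
  have hCconv : Convex ℝ C := convex_of_kernel_convergence (fun n => hconv (φ n)) hC h₁ h₂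
  have hpC : p ∈ C := by
    have := hmem 1 p one_pos le_rfl fun n => hball n (mem_ball_self hr)
    simpa using this
  have hZ : ∀ m : Fin d, Zset d m ∩ C = ∅ := by
    intro m
    refine eq_empty_of_forall_notMem fun x hx => hnot x (fun n hn => ?_) hx.2
    exact ((h n).1.2 m).1.subset ⟨hx.1, hn⟩
  have haxC : ∀ z : ℂ, z • EuclideanSpace.single (0 : Fin d) (1 : ℂ) ∈ C ↔ 0 < z.im := by
    intro z
    constructor
    · intro hz
      by_contra hz'
      exact hnot _ (fun n hn => hz' ((hax n z).1 hn)) hz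
    · intro hz
      obtain ⟨t, ht, ht1, htz⟩ : ∃ t : ℝ, 0 < t ∧ t < 1 ∧ t < z.im := by
        obtain ⟨t, ht, ht'⟩ := exists_between (lt_min one_pos hz)
        exact ⟨t, ht, lt_min_iff.1 ht'⟩
      have ht1' : 0 < 1 - t := sub_pos.2 ht1
      have := hmem t (((1 - t)⁻¹ • (z - t • Complex.I)) • EuclideanSpace.single (0 : Fin d) (1 : ℂ))
        ht ht1.le fun n => (hax n _).2 (by
          rw [Complex.smul_im, Complex.sub_im, Complex.smul_im, Complex.I_im, smul_eq_mul,
            smul_eq_mul, mul_one]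
          exact mul_pos (inv_pos.2 ht1') (sub_pos.2 htz))
      rw [smul_assoc, smul_inv_smul₀ ht1'.ne', hp, sub_smul, smul_assoc, sub_add_cancel] at this
      exact this
  refine ⟨φ, hφ, C, ⟨⟨⟨⟨hC, hCconv, ⟨p, hpC⟩⟩, noComplexLine_of_Zset hC hCconv hpC hZ⟩,
    fun m => ⟨hZ m, fun w hw => ?_⟩⟩, ?_, fun r hr1 => ?_⟩,
    locHausConv_of_kernel_convergence (fun n => hconv (φ n)) hr (fun n => hball (φ n)) h₁ h₂⟩
  · obtain ⟨t, ht, ht1⟩ : ∃ t : ℝ, 0 < t ∧ t < 1 - (|w.re| + |w.im|) :=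
      exists_between (sub_pos.2 hw)
    have hpos : 0 < 1 - t := by linarith [abs_nonneg w.re, abs_nonneg w.im]
    have hw' : (1 - t)⁻¹ • w ∈ D1set := by
      change |_| + |_| < (1 : ℝ)
      rw [Complex.smul_re, Complex.smul_im, smul_eq_mul, smul_eq_mul, abs_mul, abs_mul,
        abs_of_pos (inv_pos.2 hpos), ← mul_add, inv_mul_lt_iff₀ hpos]
      linarith
    have := hmem t (p + ((1 - t)⁻¹ • w) • EuclideanSpace.single m (1 : ℂ)) ht
      (by linarith) fun n => ((h n).1.2 m).2 _ hw'
    rw [smul_add, smul_assoc, smul_inv_smul₀ hpos.ne'] at this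
    convert this using 1
    module
  · ext x
    constructor
    · rintro ⟨⟨z, rfl⟩, hz⟩
      exact ⟨z, (haxC z).1 hz, rfl⟩
    · rintro ⟨z, hz, rfl⟩
      exact ⟨⟨z, rfl⟩, (haxC z).2 hz⟩
  · refine distInDir_le_of_kernel_convergence (fun n => hopen (φ n)) hC h₁ ((haxC _).2 ?_)
      fun n => (h (φ n)).2.2 r hr1
    simp only [Complex.mul_im, Complex.ofReal_re, Complex.ofReal_im, Complex.I_im, Complex.I_re]
    linarith
end
end
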